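/- Let R be a commutative ℚ-algebra, let r ≥ 3 be an integer, and set a(r) = −(1/2880)(r−1)(r−3)(r²−4r−6) and b(r) = (1/480)(2r²−3). Let y_1, y_2, y_3, … be any sequence of elements of R, define C_0 = 1 and C_m = Σ_{μ ⊢ m} (ℓ(μ)!/Π_i m_i(μ)!) Π_j y_{μ_j} for m ≥ 1, and define f_2(μ) = (1/5760)(2·p_2(μ)·p_1(μ)² + p_1(μ)⁴ + 12·p_2(μ)·p_1(μ) + 8·p_1(μ)³ + 15·p_2(μ) + 20·p_1(μ)² + 18·p_1(μ)). Then Σ_{(i,j,k)∈ℕ³, i+j+k=r−3} (a(r) + b(r)·i²) · C_i·C_j·C_k = Σ_{μ ⊢ r−3} ((ℓ(μ)+2)!/Π_i m_i(μ)!) · f_2(μ) · Π_j y_{μ_j}. -/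

import Mathlib

/-!
Put `Y = ∑_{i=1}^{n} yᵢ Xⁱ` with `n = r - 3` and `G = 1/(1 - Y)`, a power series over `R`. The
multinomial theorem for `Yᵏ` (`coeff_Y_pow`) together with `G^(d+1) = ∑ₖ binom(k+d, d) Yᵏ`
(`X_pow_dvd_pow_sub`) shows that `C m` is the `m`-th coefficient of `G` for `m ≤ n`, and that
the `n`-th coefficient of `G³` is `∑_{μ ⊢ n} ((ℓ(μ)+2)!/(2 ∏ mᵢ!)) y_μ`.

Let `D = X d/dX`. The power sum `p₂` enters through the first-order deformation
`yᵢ ↦ (1 + i² ε) yᵢ` over the dual numbers: `y_μ` becomes `(1 + p₂(μ) ε) y_μ`, while the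
`ε`-part of `Yᵏ` is `k Y^(k-1) D²Y` (`coeff_Y_pow_mul`). Hence the `n`-th coefficient of
`G⁴ D²Y` is `∑_{μ ⊢ n} ((ℓ(μ)+2)!/(6 ∏ mᵢ!)) p₂(μ) y_μ`.

Differentiating `G (1 - Y) = 1` twice gives `6 G² D²G = D²(G³) + 3 G⁴ D²Y`
(`six_mul_sq_mul_deriv`), so the `n`-th coefficient of `G² D²G`, which is
`∑_{i+j+k=n} i² Cᵢ Cⱼ C_k`, equals `∑_{μ ⊢ n} ((ℓ(μ)+2)!/∏ mᵢ!) ((n² + p₂(μ))/12) y_μ`.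
The theorem then reduces to the polynomial identity `a(r)/2 + b(r) (n² + p₂)/12 = f₂(n, p₂)`.
-/

open Finset

/-- The Goulden–Rattan coefficient `a(r) = −(1/2880)(r−1)(r−3)(r²−4r−6)`. -/
def aGR (r : ℕ) : ℚ :=
  -(1 / 2880) * ((r : ℚ) - 1) * ((r : ℚ) - 3) * ((r : ℚ) ^ 2 - 4 * (r : ℚ) - 6)

/-- The Goulden–Rattan coefficient `b(r) = (1/480)(2r²−3)`. -/
def bGR (r : ℕ) : ℚ := (1 / 480) * (2 * (r : ℚ) ^ 2 - 3)

/-- The weight function `f₂`, as a function of the first two power sums of its argument. -/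
def f2val (p1 p2 : ℚ) : ℚ :=
  (1 / 5760) * (2 * p2 * p1 ^ 2 + p1 ^ 4 + 12 * p2 * p1 + 8 * p1 ^ 3
    + 15 * p2 + 20 * p1 ^ 2 + 18 * p1)

open PowerSeries

namespace GouldenRattan

/-! ### Orderings of a multiset and sums over partitions -/

/-- The number `ℓ(μ)! / ∏ᵢ mᵢ(μ)!` of distinct orderings of the multiset `s`. -/
def weight (s : Multiset ℕ) : ℚ :=
  (s.card.factorial : ℚ) / ∏ i ∈ s.toFinset, ((s.count i).factorial : ℚ)

theorem countPerms_eq_weight (s : Multiset ℕ) : (s.countPerms : ℚ) = weight s := by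
  have h := Nat.multinomial_spec s.toFinset s.count
  rw [Multiset.toFinset_sum_count_eq] at h
  have h' : s.countPerms = Nat.multinomial s.toFinset s.count := by
    rw [Multiset.countPerms, Finsupp.multinomial_eq, Multiset.toFinsupp_support]
    rfl
  rw [h', weight, ← h, eq_div_iff]
  · push_cast
    ring
  · exact Finset.prod_ne_zero_iff.mpr fun i _ => by positivity

/-- The sum in `Finset.sum_pow`, cut down to multisets of sum `n`, is a sum over partitions. -/
theorem sum_sym_eq_sum_partition {M : Type*} [AddCommMonoid M] (n N k : ℕ) (h : n ≤ N)
    (g : Multiset ℕ → M) :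
    (∑ s ∈ (Icc 1 N).sym k, if s.val.sum = n then g s.val else 0) =
      ∑ μ : n.Partition, if μ.parts.card = k then g μ.parts else 0 := by
  rw [← Finset.sum_filter, ← Finset.sum_filter]
  refine Finset.sum_bij'
    (fun s hs => ⟨s.val, fun {i} hi => ?_, (Finset.mem_filter.mp hs).2⟩)
    (fun μ hμ => ⟨μ.parts, (Finset.mem_filter.mp hμ).2⟩) ?_ ?_ ?_ ?_ ?_
  · have := Finset.mem_sym_iff.mp (Finset.mem_filter.mp hs).1 i hi
    exact (Finset.mem_Icc.mp this).1
  · intro s hs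
    simp only [Finset.mem_filter, Finset.mem_univ, true_and]
    exact s.2
  · intro μ hμ
    refine Finset.mem_filter.mpr ⟨Finset.mem_sym_iff.mpr fun i hi => Finset.mem_Icc.mpr ⟨μ.parts_pos hi, ?_⟩, μ.parts_sum⟩
    exact (Multiset.le_sum_of_mem hi).trans (μ.parts_sum.le.trans h)
  · intro s hs
    rfl
  · intro μ hμ
    rfl
  · intro s hs
    rfl

/-! ### Power series over a commutative ring -/

section Ring

variable {R : Type*} [CommRing R]

/-- The truncated generating function `∑_{i=1}^{N} yᵢ Xⁱ`. -/
noncomputable def genY (y : ℕ → R) (N : ℕ) : R⟦X⟧ := ∑ i ∈ Icc 1 N, monomial i (y i)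

/-- The derivation `D = X d/dX` of `R⟦X⟧`. -/
noncomputable def eulerD : Derivation R R⟦X⟧ R⟦X⟧ := (X : R⟦X⟧) • PowerSeries.derivative R

theorem coeff_eulerD (f : R⟦X⟧) (n : ℕ) : coeff n (eulerD f) = n * coeff n f := by
  cases n with
  | zero => simp [eulerD]
  | succ n =>
    simp only [eulerD, Derivation.smul_apply, smul_eq_mul, coeff_succ_X_mul, coeff_derivative]
    push_cast
    ring

theorem eulerD_eulerD_genY (y : ℕ → R) (N : ℕ) :
    eulerD (eulerD (genY y N)) = ∑ i ∈ Icc 1 N, ((i ^ 2 : ℕ) : R⟦X⟧) * monomial i (y i) := by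
  simp only [genY, map_sum]
  refine Finset.sum_congr rfl fun i _ => ?_
  ext n
  rw [← nsmul_eq_mul, map_nsmul, coeff_eulerD, coeff_eulerD, coeff_monomial]
  split_ifs with h
  · subst h
    simp only [nsmul_eq_mul]
    push_cast
    ring
  · simp

/-- The product of the deformed monomials `(1 + i² ε) yᵢ Xⁱ` over a multiset `s` is
`(1 + p₂(s) ε) y_s X^(p₁(s))`. -/
theorem prod_deformed (y : ℕ → R) (s : Multiset ℕ) :
    (s.map fun i => (TrivSqZeroExt.inl (monomial i (y i)) +
      TrivSqZeroExt.inr (((i ^ 2 : ℕ) : R⟦X⟧) * monomial i (y i)) :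
        TrivSqZeroExt R⟦X⟧ R⟦X⟧)).prod =
      TrivSqZeroExt.inl (monomial s.sum (s.map y).prod) +
        TrivSqZeroExt.inr ((((s.map (· ^ 2)).sum : ℕ) : R⟦X⟧) *
          monomial s.sum (s.map y).prod) := by
  induction s using Multiset.induction_on with
  | empty => simp
  | cons a s ih =>
    rw [Multiset.map_cons, Multiset.prod_cons, ih]
    simp only [Multiset.map_cons, Multiset.prod_cons, Multiset.sum_cons,
      ← monomial_mul_monomial]
    ext1
    · simp
    · simp only [TrivSqZeroExt.snd_mul, TrivSqZeroExt.fst_add, TrivSqZeroExt.snd_add,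
        TrivSqZeroExt.fst_inl, TrivSqZeroExt.fst_inr, TrivSqZeroExt.snd_inl,
        TrivSqZeroExt.snd_inr, MulOpposite.smul_eq_mul_unop, MulOpposite.unop_op, smul_eq_mul]
      push_cast
      ring

/-- The multinomial theorem over the dual numbers, for the deformed series
`∑ᵢ (1 + i² ε) yᵢ Xⁱ = Y + ε D²Y`. -/
theorem deformed_pow (y : ℕ → R) (N k : ℕ) :
    (TrivSqZeroExt.inl (genY y N) + TrivSqZeroExt.inr (eulerD (eulerD (genY y N))) :
        TrivSqZeroExt R⟦X⟧ R⟦X⟧) ^ k =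
      ∑ s ∈ (Icc 1 N).sym k, s.val.countPerms •
        (TrivSqZeroExt.inl (monomial s.val.sum (s.val.map y).prod) +
        TrivSqZeroExt.inr ((((s.val.map (· ^ 2)).sum : ℕ) : R⟦X⟧) *
          monomial s.val.sum (s.val.map y).prod)) := by
  have h : (TrivSqZeroExt.inl (genY y N) + TrivSqZeroExt.inr (eulerD (eulerD (genY y N))) :
        TrivSqZeroExt R⟦X⟧ R⟦X⟧) =
      ∑ i ∈ Icc 1 N, (TrivSqZeroExt.inl (monomial i (y i)) +
        TrivSqZeroExt.inr (((i ^ 2 : ℕ) : R⟦X⟧) * monomial i (y i))) := by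
    rw [eulerD_eulerD_genY, genY]
    ext1
    · simp [TrivSqZeroExt.fst_sum]
    · simp [TrivSqZeroExt.snd_sum]
  rw [h, Finset.sum_pow]
  refine Finset.sum_congr rfl fun s _ => ?_
  rw [prod_deformed, nsmul_eq_mul]

/-- The expansion `G^(d+1) = ∑ₖ binom(k+d, d) Yᵏ` for `G = 1/(1 - Y)`, stated modulo `X^K` for
the partial sum over `k < K`. -/
theorem X_pow_dvd_pow_sub {Y G : R⟦X⟧} (hY : X ∣ Y) (hG : G * (1 - Y) = 1) (K d : ℕ) :
    X ^ K ∣ G ^ (d + 1) - ∑ k ∈ range K, ((k + d).choose d : R⟦X⟧) * Y ^ k := by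
  have hYK : X ^ K ∣ Y ^ K := pow_dvd_pow_of_dvd hY K
  induction d with
  | zero =>
    have h : (1 - Y) * ∑ k ∈ range K, Y ^ k = 1 - Y ^ K := by
      rw [mul_comm]
      exact geom_sum_mul_neg Y K
    have : G ^ (0 + 1) - ∑ k ∈ range K, ((k + 0).choose 0 : R⟦X⟧) * Y ^ k = G * Y ^ K := by
      simp only [Nat.choose_zero_right, Nat.cast_one, one_mul, zero_add, pow_one]
      linear_combination (-G) * h + (∑ k ∈ range K, Y ^ k) * hG
    rw [this]
    exact hYK.mul_left G
  | succ d ih =>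
    have h : ∀ L : ℕ, (1 - Y) * ∑ k ∈ range L, ((k + (d + 1)).choose (d + 1) : R⟦X⟧) * Y ^ k =
        ∑ k ∈ range L, ((k + d).choose d : R⟦X⟧) * Y ^ k
          - ((L + d).choose (d + 1) : R⟦X⟧) * Y ^ L := by
      intro L
      induction L with
      | zero => simp
      | succ L ihL =>
        rw [Finset.sum_range_succ, Finset.sum_range_succ, mul_add, ihL,
          show L + (d + 1) = (L + d) + 1 by ring, show L + 1 + d = (L + d) + 1 by ring,
          Nat.choose_succ_succ]
        push_cast
        ring
    have key : G ^ (d + 1 + 1)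
          - ∑ k ∈ range K, ((k + (d + 1)).choose (d + 1) : R⟦X⟧) * Y ^ k =
        G * (G ^ (d + 1) - ∑ k ∈ range K, ((k + d).choose d : R⟦X⟧) * Y ^ k)
          + G * ((K + d).choose (d + 1) : R⟦X⟧) * Y ^ K := by
      linear_combination (-G) * h K +
        (∑ k ∈ range K, ((k + (d + 1)).choose (d + 1) : R⟦X⟧) * Y ^ k) * hG
    rw [key]
    exact dvd_add (ih.mul_left G) (hYK.mul_left _)

/-- The consequence of differentiating `G (1 - Y) = 1` twice. -/
theorem six_mul_sq_mul_deriv {Y G : R⟦X⟧} (hG : G * (1 - Y) = 1)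
    (D : Derivation R R⟦X⟧ R⟦X⟧) :
    6 * (G ^ 2 * D (D G)) = D (D (G ^ 3)) + 3 * (G ^ 4 * D (D Y)) := by
  have h1 : D G = G ^ 2 * D Y := by
    have h := congrArg D hG
    simp only [Derivation.leibniz, map_sub, Derivation.map_one_eq_zero, smul_eq_mul] at h
    linear_combination G * h - D G * hG
  have h2 : D (D G) = G ^ 2 * D (D Y) + 2 * G ^ 3 * D Y ^ 2 := by
    rw [h1]
    simp only [Derivation.leibniz, Derivation.leibniz_pow, smul_eq_mul, nsmul_eq_mul, h1]
    push_cast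
    ring
  have h3 : D (D (G ^ 3)) = 3 * G ^ 2 * D (D G) + 6 * G * D G ^ 2 := by
    simp only [Derivation.leibniz, Derivation.leibniz_pow, smul_eq_mul, map_nsmul]
    simp only [nsmul_eq_mul]
    push_cast
    ring
  rw [h3, h2, h1]
  ring

theorem coeff_mul_mul (f g h : R⟦X⟧) (n : ℕ) :
    coeff n (f * g * h) = ∑ v ∈ Finset.Nat.antidiagonalTuple 3 n,
      coeff (v 0) f * coeff (v 1) g * coeff (v 2) h := by
  have e : f * g * h = ∏ j : Fin 3, ![f, g, h] j := by simp [Fin.prod_univ_three]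
  rw [e, coeff_prod]
  refine Finset.sum_equiv Finsupp.equivFunOnFinite ?_ ?_
  · intro l
    simp [Finset.Nat.mem_antidiagonalTuple]
  · intro l _
    simp [Fin.prod_univ_three]

/-- Collecting the partitions of `n` by length; a partition of `n` has at most `n` parts, so
lengths below `K` suffice. -/
theorem sum_range_partition {n K : ℕ} (h : n < K) (c : ℕ → ℕ) (g : n.Partition → R) :
    ∑ k ∈ range K, c k • (∑ μ : n.Partition, if μ.parts.card = k then g μ else 0) =
      ∑ μ : n.Partition, c μ.parts.card • g μ := by
  simp only [Finset.smul_sum]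
  rw [Finset.sum_comm]
  refine Finset.sum_congr rfl fun μ _ => ?_
  have hμ : μ.parts.card < K := by
    refine lt_of_le_of_lt ?_ h
    have := Multiset.card_nsmul_le_sum (s := μ.parts) (a := 1) fun i hi => μ.parts_pos hi
    simpa [μ.parts_sum] using this
  rw [Finset.sum_eq_single_of_mem μ.parts.card (Finset.mem_range.mpr hμ)]
  · simp
  · intro k _ hk
    rw [if_neg (Ne.symm hk), smul_zero]

theorem X_dvd_genY (y : ℕ → R) (N : ℕ) : X ∣ genY y N := by
  refine Finset.dvd_sum fun i hi => X_dvd_iff.mpr ?_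
  rw [← coeff_zero_eq_constantCoeff_apply, coeff_monomial, if_neg]
  have := (Finset.mem_Icc.mp hi).1
  omega

end Ring

/-! ### Coefficients as sums over partitions -/

section Algebra

variable {R : Type*} [CommRing R] [Algebra ℚ R]

theorem nsmul_countPerms (s : Multiset ℕ) (x : R) : s.countPerms • x = weight s • x := by
  rw [← countPerms_eq_weight, Nat.cast_smul_eq_nsmul]

/-- Multinomial theorem: the coefficients of `Yᵏ` as sums over partitions with `k` parts. -/
theorem coeff_Y_pow (y : ℕ → R) {n N : ℕ} (h : n ≤ N) (k : ℕ) :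
    coeff n (genY y N ^ k) = ∑ μ : n.Partition, if μ.parts.card = k then
      weight μ.parts • (μ.parts.map y).prod else 0 := by
  have e := congrArg (fun z => coeff n (TrivSqZeroExt.fst z)) (deformed_pow y N k)
  simp only [TrivSqZeroExt.fst_pow, TrivSqZeroExt.fst_sum, TrivSqZeroExt.fst_smul,
    TrivSqZeroExt.fst_add, TrivSqZeroExt.fst_inl, TrivSqZeroExt.fst_inr, add_zero, map_sum,
    map_nsmul] at e
  rw [e, ← sum_sym_eq_sum_partition n N k h fun s => weight s • (s.map y).prod]
  refine Finset.sum_congr rfl fun s _ => ?_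
  rw [nsmul_countPerms, coeff_monomial]
  simp only [eq_comm (a := n)]
  split_ifs <;> simp

/-- The `ε`-part of the multinomial theorem for the deformed series. -/
theorem coeff_Y_pow_mul (y : ℕ → R) {n N : ℕ} (h : n ≤ N) (k : ℕ) :
    coeff n ((k : R⟦X⟧) * genY y N ^ (k - 1) * eulerD (eulerD (genY y N))) =
      ∑ μ : n.Partition, if μ.parts.card = k then
        (weight μ.parts * ((μ.parts.map (· ^ 2)).sum : ℕ)) • (μ.parts.map y).prod else 0 := by
  have e := congrArg (fun z => coeff n (TrivSqZeroExt.snd z)) (deformed_pow y N k)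
  simp only [TrivSqZeroExt.snd_pow, TrivSqZeroExt.snd_sum, TrivSqZeroExt.snd_smul,
    TrivSqZeroExt.snd_add, TrivSqZeroExt.fst_add, TrivSqZeroExt.fst_inl, TrivSqZeroExt.fst_inr,
    TrivSqZeroExt.snd_inl, TrivSqZeroExt.snd_inr, add_zero, zero_add, map_sum] at e
  rw [mul_assoc, ← nsmul_eq_mul, ← smul_eq_mul (genY y N ^ (k - 1)), ← Nat.pred_eq_sub_one, e,
    ← sum_sym_eq_sum_partition n N k h
      fun s => (weight s * ((s.map (· ^ 2)).sum : ℕ)) • (s.map y).prod]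
  refine Finset.sum_congr rfl fun s _ => ?_
  rw [map_nsmul, nsmul_countPerms, ← nsmul_eq_mul, map_nsmul, coeff_monomial]
  simp only [eq_comm (a := n)]
  split_ifs
  · rw [mul_smul, Nat.cast_smul_eq_nsmul]
  · simp

theorem coeff_G_pow (y : ℕ → R) {n N : ℕ} (h : n ≤ N) {G : R⟦X⟧} (hG : G * (1 - genY y N) = 1)
    (d : ℕ) :
    coeff n (G ^ (d + 1)) = ∑ μ : n.Partition,
      (μ.parts.card + d).choose d • weight μ.parts • (μ.parts.map y).prod := by
  have hd := X_pow_dvd_iff.mp (X_pow_dvd_pow_sub (X_dvd_genY y N) hG (n + 1) d) n n.lt_succ_self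
  rw [map_sub, sub_eq_zero] at hd
  rw [hd, ← sum_range_partition n.lt_succ_self (fun k => (k + d).choose d), map_sum]
  refine Finset.sum_congr rfl fun k _ => ?_
  rw [← nsmul_eq_mul, map_nsmul, coeff_Y_pow y h]

/-- The `ε`-derivative of the formula for `G³`: since `binom(k+2, 2) k = 3 binom(k+2, 3)`, the
series `∑ₖ binom(k+2, 2) k Y^(k-1) D²Y` is `3 G⁴ D²Y`. -/
theorem coeff_G_pow_four_mul (y : ℕ → R) {n N : ℕ} (h : n ≤ N) {G : R⟦X⟧}
    (hG : G * (1 - genY y N) = 1) :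
    coeff n (3 * (G ^ 4 * eulerD (eulerD (genY y N)))) = ∑ μ : n.Partition,
      (μ.parts.card + 2).choose 2 •
        (weight μ.parts * ((μ.parts.map (· ^ 2)).sum : ℕ)) • (μ.parts.map y).prod := by
  set Z := eulerD (eulerD (genY y N)) with hZ
  have hd := X_pow_dvd_iff.mp (((X_pow_dvd_pow_sub (X_dvd_genY y N) hG (n + 1) 3).mul_right
    Z).mul_left 3) n n.lt_succ_self
  rw [sub_mul, mul_sub, map_sub, sub_eq_zero] at hd
  rw [hd, ← sum_range_partition (n.lt_succ_self.trans n.succ.lt_succ_self)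
    (fun k => (k + 2).choose 2), Finset.sum_mul, Finset.mul_sum, map_sum,
    Finset.sum_range_succ' _ (n + 1)]
  -- the term of index `0` vanishes, since `k Y^(k-1)` does
  rw [← coeff_Y_pow_mul y h 0, Nat.cast_zero, zero_mul, zero_mul, map_zero, smul_zero, add_zero]
  refine Finset.sum_congr rfl fun k _ => ?_
  rw [← coeff_Y_pow_mul y h (k + 1), ← map_nsmul, ← hZ, Nat.add_sub_cancel, nsmul_eq_mul]
  have hc : ((k + 3).choose 3) * 3 = (k + 3).choose 2 * (k + 1) :=
    Nat.choose_succ_right_eq (k + 3) 2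
  have hc' : ((k + 3).choose 3 : R⟦X⟧) * 3 = (k + 3).choose 2 * ((k + 1 : ℕ) : R⟦X⟧) := by
    exact_mod_cast congrArg (Nat.cast : ℕ → R⟦X⟧) hc
  congr 1
  rw [show k + 1 + 2 = k + 3 by ring]
  linear_combination (genY y N ^ k * Z) * hc'

end Algebra

theorem choose_two_mul_weight (s : Multiset ℕ) :
    ((s.card + 2).choose 2 : ℚ) * weight s =
      ((s.card + 2).factorial : ℚ) / (∏ i ∈ s.toFinset, ((s.count i).factorial : ℚ)) / 2 := by
  have h : (s.card + 2).choose 2 * 2 * s.card.factorial = (s.card + 2).factorial := by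
    have := Nat.choose_mul_factorial_mul_factorial (n := s.card + 2) (k := 2) (by omega)
    simpa using this
  rw [weight, ← h]
  push_cast
  ring

end GouldenRattan

open GouldenRattan

/-- **Theorem 1 (abstract form).** With `C₀ = 1` and
`C_m = ∑_{μ ⊢ m} (ℓ(μ)!/∏ᵢ mᵢ(μ)!) ∏ⱼ y_{μⱼ}` for `m ≥ 1`, for any integer `r ≥ 3`:
`∑_{i+j+k=r−3} (a(r) + b(r) i²) Cᵢ Cⱼ C_k
  = ∑_{μ ⊢ r−3} ((ℓ(μ)+2)!/∏ᵢ mᵢ(μ)!) f₂(μ) ∏ⱼ y_{μⱼ}`. -/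
theorem goulden_rattan_f2_expansion (R : Type*) [CommRing R] [Algebra ℚ R]
    (r : ℕ) (hr : 3 ≤ r) (y : ℕ → R) (C : ℕ → R) (hC0 : C 0 = 1)
    (hC : ∀ m : ℕ, 1 ≤ m → C m = ∑ μ : m.Partition,
      ((μ.parts.card.factorial : ℚ) /
          ∏ i ∈ μ.parts.toFinset, ((μ.parts.count i).factorial : ℚ)) •
        (μ.parts.map y).prod) :
    ∑ v ∈ Finset.Nat.antidiagonalTuple 3 (r - 3),
        (aGR r + bGR r * (v 0 : ℚ) ^ 2) • (C (v 0) * C (v 1) * C (v 2)) =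
    ∑ μ : (r - 3).Partition,
      ((((μ.parts.card + 2).factorial : ℚ) /
          ∏ i ∈ μ.parts.toFinset, ((μ.parts.count i).factorial : ℚ)) *
        f2val (μ.parts.sum : ℚ) (((μ.parts.map (· ^ 2)).sum : ℕ) : ℚ)) •
        (μ.parts.map y).prod := by
  obtain ⟨n, rfl⟩ : ∃ n, r = n + 3 := ⟨r - 3, by omega⟩
  simp only [Nat.add_sub_cancel]
  obtain ⟨G, hG⟩ : ∃ G : R⟦X⟧, G * (1 - genY y n) = 1 := by
    have hu : IsUnit (1 - genY y n) := by
      rw [PowerSeries.isUnit_iff_constantCoeff, map_sub, X_dvd_iff.mp (X_dvd_genY y n)]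
      simp
    obtain ⟨G, hG⟩ := hu.exists_left_inv
    exact ⟨G, hG⟩
  have hCG : ∀ m ≤ n, C m = coeff m G := by
    intro m hm
    have h := coeff_G_pow y hm hG 0
    rw [zero_add, pow_one] at h
    rcases Nat.eq_zero_or_pos m with rfl | hpos
    · simp [hC0, h, weight]
    · rw [hC m hpos, h]
      simp [weight]
  have h3 := coeff_G_pow y le_rfl hG 2
  have h4 := coeff_G_pow_four_mul y le_rfl hG
  have h6 := congrArg (coeff n) (six_mul_sq_mul_deriv hG eulerD)
  rw [map_add, h4, coeff_eulerD, coeff_eulerD, h3] at h6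
  have hL : ∑ v ∈ Finset.Nat.antidiagonalTuple 3 n,
        (aGR (n + 3) + bGR (n + 3) * (v 0 : ℚ) ^ 2) • (C (v 0) * C (v 1) * C (v 2)) =
      aGR (n + 3) • coeff n (G ^ 3) +
        (bGR (n + 3) / 6) • coeff n (6 * (G ^ 2 * eulerD (eulerD G))) := by
    have e6 : (6 * (G ^ 2 * eulerD (eulerD G))) =
        (6 : ℕ) • (eulerD (eulerD G) * G * G) := by
      rw [nsmul_eq_mul]
      push_cast
      ring
    rw [e6, map_nsmul, pow_three', coeff_mul_mul, coeff_mul_mul, ← Nat.cast_smul_eq_nsmul ℚ,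
      smul_smul, Finset.smul_sum, Finset.smul_sum, ← Finset.sum_add_distrib]
    refine Finset.sum_congr rfl fun v hv => ?_
    have hs := Finset.Nat.mem_antidiagonalTuple.mp hv
    rw [Fin.sum_univ_three] at hs
    rw [hCG _ (by omega : v 0 ≤ n), hCG _ (by omega : v 1 ≤ n), hCG _ (by omega : v 2 ≤ n),
      coeff_eulerD, coeff_eulerD, add_smul]
    congr 1
    rw [show bGR (n + 3) / 6 * ((6 : ℕ) : ℚ) = bGR (n + 3) by push_cast; ring]
    simp only [Algebra.smul_def, map_mul, map_pow, map_natCast]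
    ring
  rw [hL, h6, h3, Finset.mul_sum, Finset.mul_sum, ← Finset.sum_add_distrib, Finset.smul_sum,
    Finset.smul_sum, ← Finset.sum_add_distrib]
  refine Finset.sum_congr rfl fun μ _ => ?_
  rw [μ.parts_sum]
  simp only [← nsmul_eq_mul, ← Nat.cast_smul_eq_nsmul ℚ, smul_smul, ← add_smul]
  congr 1
  have hw := choose_two_mul_weight μ.parts
  set p2 : ℚ := (((μ.parts.map (· ^ 2)).sum : ℕ) : ℚ)
  set W : ℚ := ((μ.parts.card + 2).factorial : ℚ) /
    ∏ i ∈ μ.parts.toFinset, ((μ.parts.count i).factorial : ℚ)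
  have hab : aGR (n + 3) / 2 + bGR (n + 3) * ((n : ℚ) ^ 2 + p2) / 12 = f2val n p2 := by
    simp only [aGR, bGR, f2val]
    push_cast
    ring
  rw [← hab]
  linear_combination (aGR (n + 3) + bGR (n + 3) / 6 * ((n : ℚ) ^ 2 + p2)) * hw
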